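/- Let I_ν, I_π be the score covariance matrices I_p = E_p[∇ log p(X) ∇ log p(X)^⊤], assumed positive definite. The matrix A minimising E_{X∼μ_t}[Var_{Y∼ϱ_{t,X}}(A s_1(X,Y) + (I-A) s_2(Y))] over A ∈ ℝ^{d×d} is A_t* = λ_t^{-1} I_π ((1-λ_t)^{-1} I_ν + λ_t^{-1} I_π)^{-1}, and the objective is convex in A (its Hessian with respect to the entries of A is block diagonal with identical positive-definite blocks 2((1-λ_t)^{-1} I_ν + λ_t^{-1} I_π)). -/

import Mathlib

open MeasureTheory Real

noncomputable section

/-- Finite weighted second moments imply a finite weighted mixed moment. -/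
theorem integrable_weight_mul_mul {X : Type*} [MeasurableSpace X] {m : Measure X}
    {w f g : X → ℝ} (hw : ∀ x, 0 ≤ w x)
    (hm : AEStronglyMeasurable (fun x => w x * (f x * g x)) m)
    (hf : Integrable (fun x => w x * (f x * f x)) m)
    (hg : Integrable (fun x => w x * (g x * g x)) m) :
    Integrable (fun x => w x * (f x * g x)) m := by
  refine (hf.add hg).mono' hm (Filter.Eventually.of_forall fun x => ?_)
  have h : |f x * g x| ≤ f x * f x + g x * g x := by
    rw [abs_le]
    constructor <;> nlinarith [sq_nonneg (f x + g x), sq_nonneg (f x - g x)]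
  simp only [Pi.add_apply, norm_eq_abs, abs_mul (w x), abs_of_nonneg (hw x)]
  nlinarith [mul_le_mul_of_nonneg_left h (hw x)]

/-- A product of integrable functions remains integrable after an affine shear. -/
theorem integrable_shear_mul {E : Type*} [NormedAddCommGroup E] [NormedSpace ℝ E]
    [FiniteDimensional ℝ E] [MeasureSpace E] [BorelSpace E]
    [(volume : Measure E).IsAddHaarMeasure] {f g : E → ℝ} {a : ℝ} (b : ℝ) (ha : a ≠ 0)
    (hf : Integrable f) (hg : Integrable g) :
    Integrable (fun z : E × E => f (a • (z.1 - b • z.2)) * g z.2) (volume.prod volume) := by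
  let T : (E × E) →ₗ[ℝ] (E × E) :=
    (a • (LinearMap.fst ℝ E E - b • LinearMap.snd ℝ E E)).prod (LinearMap.snd ℝ E E)
  have hinj : Function.Injective T := by
    rintro ⟨x, y⟩ ⟨x', y'⟩ h
    have h2 : y = y' := congrArg Prod.snd h
    have h1 : a • (x - b • y) = a • (x' - b • y') := congrArg Prod.fst h
    subst h2
    simpa using smul_right_injective E ha h1
  have hdet : LinearMap.det T ≠ 0 := by
    have := LinearEquiv.isUnit_det' (LinearEquiv.ofInjectiveEndo T hinj)
    exact this.ne_zero
  have hT : Measurable T := T.continuous_of_finiteDimensional.measurable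
  have hmap := Measure.map_linearMap_addHaar_eq_smul_addHaar (volume.prod volume : Measure (E × E)) hdet
  have hfg : Integrable (fun z : E × E => f z.1 * g z.2) (Measure.map T (volume.prod volume)) := by
    rw [hmap]
    exact (hf.mul_prod hg).smul_measure ENNReal.ofReal_ne_top
  exact hfg.comp_measurable hT

section Disintegration

variable {X Y : Type*} [MeasurableSpace X] [MeasurableSpace Y] {m : Measure X} {n : Measure Y}
  [SFinite m] [SFinite n] {q ϱ f : X → Y → ℝ} {μ : X → ℝ}

/-- Conditional densities integrate back to the joint density, on almost every fibre. -/
theorem marginal_mul_conditional_ae (hn : n ≠ 0) (hq : ∀ x y, 0 < q x y)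
    (hqi : Integrable (fun z : X × Y => q z.1 z.2) (m.prod n))
    (hμ : ∀ x, μ x = ∫ y, q x y ∂n) (hϱ : ∀ x y, ϱ x y = q x y / μ x) (f : X → Y → ℝ) :
    ∀ᵐ x ∂m, μ x * ∫ y, ϱ x y * f x y ∂n = ∫ y, q x y * f x y ∂n := by
  filter_upwards [hqi.prod_right_ae] with x hx
  have hpos : 0 < μ x := by
    rw [hμ, integral_pos_iff_support_of_nonneg (fun y => (hq x y).le) hx]
    have : Function.support (fun y => q x y) = Set.univ :=
      Set.eq_univ_of_forall fun y => (hq x y).ne'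
    rw [this]
    exact Measure.measure_univ_pos.2 hn
  rw [← integral_const_mul]
  congr 1 with y
  rw [hϱ]
  field_simp

theorem integrable_conditional_ae
    (hϱ : ∀ x y, ϱ x y = q x y / μ x)
    (hf : Integrable (fun z : X × Y => q z.1 z.2 * f z.1 z.2) (m.prod n)) :
    ∀ᵐ x ∂m, Integrable (fun y => ϱ x y * f x y) n := by
  filter_upwards [hf.prod_right_ae] with x hx
  convert hx.div_const (μ x) using 2 with y
  rw [hϱ]
  ring

theorem integrable_marginal_mul_conditional (hn : n ≠ 0) (hq : ∀ x y, 0 < q x y)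
    (hqi : Integrable (fun z : X × Y => q z.1 z.2) (m.prod n))
    (hμ : ∀ x, μ x = ∫ y, q x y ∂n) (hϱ : ∀ x y, ϱ x y = q x y / μ x)
    (hf : Integrable (fun z : X × Y => q z.1 z.2 * f z.1 z.2) (m.prod n)) :
    Integrable (fun x => μ x * ∫ y, ϱ x y * f x y ∂n) m :=
  hf.integral_prod_left.congr
    ((marginal_mul_conditional_ae hn hq hqi hμ hϱ f).mono fun _ h => h.symm)

theorem integral_marginal_mul_conditional (hn : n ≠ 0) (hq : ∀ x y, 0 < q x y)
    (hqi : Integrable (fun z : X × Y => q z.1 z.2) (m.prod n))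
    (hμ : ∀ x, μ x = ∫ y, q x y ∂n) (hϱ : ∀ x y, ϱ x y = q x y / μ x)
    (hf : Integrable (fun z : X × Y => q z.1 z.2 * f z.1 z.2) (m.prod n)) :
    ∫ x, μ x * ∫ y, ϱ x y * f x y ∂n ∂m = ∫ z, q z.1 z.2 * f z.1 z.2 ∂m.prod n := by
  rw [integral_prod _ hf]
  exact integral_congr_ae (marginal_mul_conditional_ae hn hq hqi hμ hϱ f)

end Disintegration

section ControlVariate

variable {Y : Type*} [MeasurableSpace Y] {n : Measure Y} {d : ℕ}
  {w : Y → ℝ} {u v : Y → EuclideanSpace ℝ (Fin d)}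

theorem controlVariate_apply (A : Matrix (Fin d) (Fin d) ℝ) (a b : EuclideanSpace ℝ (Fin d))
    (i : Fin d) :
    (Matrix.toEuclideanLin A a + Matrix.toEuclideanLin (1 - A) b).ofLp i =
      b i + ∑ j, A i j * (a j - b j) := by
  simp only [map_sub, LinearMap.sub_apply, PiLp.add_apply, PiLp.sub_apply,
    Matrix.ofLp_toLpLin, Matrix.toLin'_apply, Matrix.one_mulVec]
  simp only [Matrix.mulVec, dotProduct, mul_sub, Finset.sum_sub_distrib]
  ring

/-- Combining two estimators with equal means does not change the mean. -/
theorem integral_controlVariate (A : Matrix (Fin d) (Fin d) ℝ)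
    (hu : ∀ i, Integrable (fun y => w y * u y i) n)
    (hv : ∀ i, Integrable (fun y => w y * v y i) n)
    (h : ∫ y, w y • u y ∂n = ∫ y, w y • v y ∂n) :
    ∫ y, w y • (Matrix.toEuclideanLin A (u y) + Matrix.toEuclideanLin (1 - A) (v y)) ∂n =
      ∫ y, w y • v y ∂n := by
  have hcoord (i : Fin d) : ∫ y, w y * u y i ∂n = ∫ y, w y * v y i ∂n := by
    have := congrArg (fun z : EuclideanSpace ℝ (Fin d) => z i) h
    simp only at this
    rwa [eval_integral_piLp (by simpa using hu), eval_integral_piLp (by simpa using hv)] at this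
  have key (i : Fin d) (y : Y) :
      (w y • (Matrix.toEuclideanLin A (u y) + Matrix.toEuclideanLin (1 - A) (v y))).ofLp i =
        w y * v y i + ∑ j, A i j * (w y * u y j - w y * v y j) := by
    rw [PiLp.smul_apply, controlVariate_apply, smul_eq_mul, mul_add, Finset.mul_sum]
    congr 1
    exact Finset.sum_congr rfl fun j _ => by ring
  have hsum (i j : Fin d) :
      Integrable (fun y => A i j * (w y * u y j - w y * v y j)) n :=
    ((hu j).sub (hv j)).const_mul _
  ext i
  rw [eval_integral_piLp, eval_integral_piLp (by simpa using hv)]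
  · simp only [key, PiLp.smul_apply, smul_eq_mul]
    rw [integral_add (hv i) (integrable_finsetSum _ fun j _ => hsum i j),
      integral_finsetSum _ fun j _ => hsum i j]
    simp only [integral_const_mul]
    simp [integral_sub (hu _) (hv _), hcoord]
  · intro i
    simp only [key]
    exact (hv i).add (integrable_finsetSum _ fun j _ => hsum i j)

theorem integral_norm_sq_controlVariate (A : Matrix (Fin d) (Fin d) ℝ)
    (hvv : ∀ i, Integrable (fun y => w y * (v y i * v y i)) n)
    (hvD : ∀ i j, Integrable (fun y => w y * (v y i * (u y j - v y j))) n)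
    (hDD : ∀ i j, Integrable (fun y => w y * ((u y i - v y i) * (u y j - v y j))) n) :
    ∫ y, w y * ‖Matrix.toEuclideanLin A (u y) + Matrix.toEuclideanLin (1 - A) (v y)‖ ^ 2 ∂n =
      ∫ y, w y * ‖v y‖ ^ 2 ∂n +
        ∑ i, ∑ j, 2 * A i j * ∫ y, w y * (v y i * (u y j - v y j)) ∂n +
        ∑ i, ∑ j, ∑ k, A i j * A i k *
          ∫ y, w y * ((u y j - v y j) * (u y k - v y k)) ∂n := by
  have key (y : Y) :
      w y * ‖Matrix.toEuclideanLin A (u y) + Matrix.toEuclideanLin (1 - A) (v y)‖ ^ 2 =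
        w y * ‖v y‖ ^ 2 +
        ∑ i, ∑ j, 2 * A i j * (w y * (v y i * (u y j - v y j))) +
        ∑ i, ∑ j, ∑ k, A i j * A i k * (w y * ((u y j - v y j) * (u y k - v y k))) := by
    simp only [EuclideanSpace.real_norm_sq_eq, controlVariate_apply, Finset.mul_sum,
      ← Finset.sum_add_distrib]
    refine Finset.sum_congr rfl fun i _ => ?_
    rw [add_sq, sq (∑ j, _), Finset.sum_mul_sum, mul_add, mul_add, Finset.mul_sum, Finset.mul_sum,
      Finset.mul_sum]
    simp only [Finset.mul_sum]
    congr 1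
    · congr 1
      exact Finset.sum_congr rfl fun j _ => by ring
    · exact Finset.sum_congr rfl fun j _ => Finset.sum_congr rfl fun k _ => by ring
  have h0 : Integrable (fun y => w y * ‖v y‖ ^ 2) n := by
    simp only [EuclideanSpace.real_norm_sq_eq, Finset.mul_sum]
    simp only [sq]
    exact integrable_finsetSum _ fun i _ => hvv i
  have h1 (i j : Fin d) :
      Integrable (fun y => 2 * A i j * (w y * (v y i * (u y j - v y j)))) n :=
    (hvD i j).const_mul _
  have h2 (i j k : Fin d) : Integrable
      (fun y => A i j * A i k * (w y * ((u y j - v y j) * (u y k - v y k)))) n :=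
    (hDD j k).const_mul _
  have h1' (i : Fin d) := integrable_finsetSum Finset.univ fun j _ => h1 i j
  have h2' (i j : Fin d) := integrable_finsetSum Finset.univ fun k _ => h2 i j k
  have h2'' (i : Fin d) := integrable_finsetSum Finset.univ fun j _ => h2' i j
  have h1'' := integrable_finsetSum Finset.univ fun i _ => h1' i
  have h2_sum := integrable_finsetSum Finset.univ fun i _ => h2'' i
  have h01 : Integrable (fun y => w y * ‖v y‖ ^ 2 +
      ∑ i, ∑ j, 2 * A i j * (w y * (v y i * (u y j - v y j)))) n := h0.add h1''
  simp only [key]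
  rw [integral_add h01 h2_sum, integral_add h0 h1'',
    integral_finsetSum _ fun i _ => h1' i, integral_finsetSum _ fun i _ => h2'' i]
  simp only [integral_finsetSum _ fun j _ => h1 _ j, integral_finsetSum _ fun j _ => h2' _ j,
    integral_finsetSum _ fun k _ => h2 _ _ k, integral_const_mul]

end ControlVariate

section MatrixQuadratic

open Matrix

variable {ι : Type*} [Fintype ι] {M B A₀ : Matrix ι ι ℝ}

theorem trace_quadratic_eq (hM : M.PosSemidef) (h : A₀ * M = B) (A : Matrix ι ι ℝ) :
    (A * M * Aᵀ).trace - 2 * (A * Bᵀ).trace =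
      (A₀ * M * A₀ᵀ).trace - 2 * (A₀ * Bᵀ).trace + ((A - A₀) * M * (A - A₀)ᵀ).trace := by
  have hMt : Mᵀ = M := by simpa using hM.isHermitian.eq
  have hB : M * A₀ᵀ = Bᵀ := by rw [← h, transpose_mul, hMt]
  have ht : (B * Aᵀ).trace = (A * Bᵀ).trace := by
    rw [← trace_transpose, transpose_mul, transpose_transpose]
  have ht₀ : (B * A₀ᵀ).trace = (A₀ * Bᵀ).trace := by
    rw [← trace_transpose, transpose_mul, transpose_transpose]
  simp only [transpose_sub, Matrix.sub_mul, Matrix.mul_sub, h, trace_sub, ht, ht₀]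
  rw [Matrix.mul_assoc A M A₀ᵀ, hB]
  ring

theorem trace_mul_mul_transpose_nonneg (hM : M.PosSemidef) (A : Matrix ι ι ℝ) :
    0 ≤ (A * M * Aᵀ).trace := by
  simpa using (hM.mul_mul_conjTranspose_same A).trace_nonneg

theorem trace_quadratic_min (hM : M.PosSemidef) (h : A₀ * M = B) (A : Matrix ι ι ℝ) :
    (A₀ * M * A₀ᵀ).trace - 2 * (A₀ * Bᵀ).trace ≤ (A * M * Aᵀ).trace - 2 * (A * Bᵀ).trace := by
  rw [trace_quadratic_eq hM h A]
  linarith [trace_mul_mul_transpose_nonneg hM (A - A₀)]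

theorem convexOn_trace_quadratic (hM : M.PosSemidef) (B : Matrix ι ι ℝ) :
    ConvexOn ℝ Set.univ fun A : Matrix ι ι ℝ => (A * M * Aᵀ).trace - 2 * (A * Bᵀ).trace := by
  refine ⟨convex_univ, fun x _ y _ a b ha hb hab => ?_⟩
  have h := mul_nonneg (mul_nonneg ha hb) (trace_mul_mul_transpose_nonneg hM (x - y))
  obtain rfl : b = 1 - a := by linarith
  simp only [transpose_sub, transpose_add, transpose_smul, Matrix.sub_mul, Matrix.mul_sub,
    Matrix.add_mul, Matrix.mul_add, Matrix.smul_mul, Matrix.mul_smul, trace_sub, trace_add,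
    trace_smul, smul_eq_mul] at h ⊢
  linear_combination h

end MatrixQuadratic

section Objective

variable {X Y : Type*} [MeasurableSpace X] [MeasurableSpace Y] {m : Measure X} {n : Measure Y}
  {d : ℕ} {q ϱ : X → Y → ℝ} {μ : X → ℝ}
  {s1 : X → Y → EuclideanSpace ℝ (Fin d)} {s2 : Y → EuclideanSpace ℝ (Fin d)}
  {M B : Matrix (Fin d) (Fin d) ℝ}

theorem integrable_sum_quadratic {u t : Fin d → Fin d → X → ℝ}
    (hui : ∀ i j, Integrable (u i j) m) (hti : ∀ i j, Integrable (t i j) m)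
    (A : Matrix (Fin d) (Fin d) ℝ) :
    Integrable (fun x => ∑ i, ∑ j, 2 * A i j * u i j x +
      ∑ i, ∑ j, ∑ k, A i j * A i k * t j k x) m :=
  (integrable_finsetSum _ fun i _ => integrable_finsetSum _ fun j _ => (hui i j).const_mul _).add
    (integrable_finsetSum _ fun _ _ => integrable_finsetSum _ fun j _ =>
      integrable_finsetSum _ fun k _ => (hti j k).const_mul _)

theorem integral_sum_quadratic {u t : Fin d → Fin d → X → ℝ}
    (hui : ∀ i j, Integrable (u i j) m) (hti : ∀ i j, Integrable (t i j) m)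
    (hu : ∀ i j, ∫ x, u i j x ∂m = -B i j) (ht : ∀ i j, ∫ x, t i j x ∂m = M i j)
    (A : Matrix (Fin d) (Fin d) ℝ) :
    ∫ x, (∑ i, ∑ j, 2 * A i j * u i j x + ∑ i, ∑ j, ∑ k, A i j * A i k * t j k x) ∂m =
      (A * M * A.transpose).trace - 2 * (A * B.transpose).trace := by
  have hGu (i j : Fin d) :
      Integrable (fun x => 2 * A i j * u i j x) m := (hui i j).const_mul _
  have hGt (i j k : Fin d) :
      Integrable (fun x => A i j * A i k * t j k x) m := (hti j k).const_mul _
  have hGu' (i : Fin d) := integrable_finsetSum Finset.univ fun j _ => hGu i j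
  have hGt' (i j : Fin d) := integrable_finsetSum Finset.univ fun k _ => hGt i j k
  have hGt'' (i : Fin d) := integrable_finsetSum Finset.univ fun j _ => hGt' i j
  have hGu'' := integrable_finsetSum Finset.univ fun i _ => hGu' i
  have hGt3 := integrable_finsetSum Finset.univ fun i _ => hGt'' i
  rw [integral_add hGu'' hGt3, integral_finsetSum _ fun i _ => hGu' i,
    integral_finsetSum _ fun i _ => hGt'' i]
  simp only [integral_finsetSum _ fun j _ => hGu _ j,
    integral_finsetSum _ fun j _ => hGt' _ j,
    integral_finsetSum _ fun k _ => hGt _ _ k, integral_const_mul, hu, ht]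
  rw [add_comm, sub_eq_add_neg]
  congr 1
  · simp only [Matrix.trace, Matrix.diag_apply, Matrix.mul_apply, Matrix.transpose_apply,
      Finset.sum_mul]
    refine Finset.sum_congr rfl fun i _ => ?_
    rw [Finset.sum_comm]
    exact Finset.sum_congr rfl fun j _ => Finset.sum_congr rfl fun k _ => by ring
  · simp only [Matrix.trace, Matrix.diag_apply, Matrix.mul_apply, Matrix.transpose_apply,
      Finset.mul_sum, ← Finset.sum_neg_distrib]
    exact Finset.sum_congr rfl fun i _ => Finset.sum_congr rfl fun j _ => by ring

/-- The expected variance is, up to an additive constant, a quadratic function of the matrix `A`;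
if the part that does not depend on `A` fails to be integrable, it is identically zero. -/
theorem exists_expectedVariance_eq [SFinite m] [SFinite n] (hn : n ≠ 0) (hq : ∀ x y, 0 < q x y)
    (hqi : Integrable (fun z : X × Y => q z.1 z.2) (m.prod n))
    (hμ : ∀ x, μ x = ∫ y, q x y ∂n) (hϱ : ∀ x y, ϱ x y = q x y / μ x)
    (h1 : ∀ i, Integrable (fun z : X × Y => q z.1 z.2 * s1 z.1 z.2 i) (m.prod n))
    (h2 : ∀ i, Integrable (fun z : X × Y => q z.1 z.2 * s2 z.2 i) (m.prod n))
    (h22 : ∀ i j, Integrable (fun z : X × Y => q z.1 z.2 * (s2 z.2 i * s2 z.2 j)) (m.prod n))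
    (h1D : ∀ i j, Integrable
      (fun z : X × Y => q z.1 z.2 * (s1 z.1 z.2 i * (s1 z.1 z.2 j - s2 z.2 j))) (m.prod n))
    (h2D : ∀ i j, Integrable
      (fun z : X × Y => q z.1 z.2 * (s2 z.2 i * (s1 z.1 z.2 j - s2 z.2 j))) (m.prod n))
    (hA : ∀ i j, ∫ x, μ x * ∫ y, ϱ x y * (s1 x y i * (s1 x y j - s2 y j)) ∂n ∂m =
      M i j - B i j)
    (hB : ∀ i j, ∫ x, μ x * ∫ y, ϱ x y * (s2 y i * (s1 x y j - s2 y j)) ∂n ∂m = -B i j)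
    (hmean : ∀ x, ∫ y, ϱ x y • s1 x y ∂n = ∫ y, ϱ x y • s2 y ∂n) :
    ∃ c e : ℝ, 0 ≤ e ∧ ∀ A : Matrix (Fin d) (Fin d) ℝ,
      ∫ x, μ x * ((∫ y, ϱ x y * ‖Matrix.toEuclideanLin A (s1 x y) +
          Matrix.toEuclideanLin (1 - A) (s2 y)‖ ^ 2 ∂n) -
        ‖∫ y, ϱ x y • (Matrix.toEuclideanLin A (s1 x y) +
          Matrix.toEuclideanLin (1 - A) (s2 y)) ∂n‖ ^ 2) ∂m =
      c + e * ((A * M * A.transpose).trace - 2 * (A * B.transpose).trace) := by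
  have hDD (i j : Fin d) : Integrable (fun z : X × Y =>
      q z.1 z.2 * ((s1 z.1 z.2 i - s2 z.2 i) * (s1 z.1 z.2 j - s2 z.2 j))) (m.prod n) := by
    refine ((h1D i j).sub (h2D i j)).congr (.of_forall fun z => ?_)
    simp only [Pi.sub_apply]
    ring
  let u (i j : Fin d) (x : X) : ℝ := μ x * ∫ y, ϱ x y * (s2 y i * (s1 x y j - s2 y j)) ∂n
  let t (i j : Fin d) (x : X) : ℝ :=
    μ x * ∫ y, ϱ x y * ((s1 x y i - s2 y i) * (s1 x y j - s2 y j)) ∂n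
  have hui (i j : Fin d) : Integrable (u i j) m :=
    integrable_marginal_mul_conditional (f := fun x y => s2 y i * (s1 x y j - s2 y j))
      hn hq hqi hμ hϱ (h2D i j)
  have hti (i j : Fin d) : Integrable (t i j) m :=
    integrable_marginal_mul_conditional
      (f := fun x y => (s1 x y i - s2 y i) * (s1 x y j - s2 y j)) hn hq hqi hμ hϱ (hDD i j)
  have hu (i j : Fin d) : ∫ x, u i j x ∂m = -B i j := hB i j
  have ht (i j : Fin d) : ∫ x, t i j x ∂m = M i j := by
    have e1 := integral_marginal_mul_conditional
      (f := fun x y => s1 x y i * (s1 x y j - s2 y j)) hn hq hqi hμ hϱ (h1D i j)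
    have e2 := integral_marginal_mul_conditional
      (f := fun x y => s2 y i * (s1 x y j - s2 y j)) hn hq hqi hμ hϱ (h2D i j)
    have e3 := integral_marginal_mul_conditional
      (f := fun x y => (s1 x y i - s2 y i) * (s1 x y j - s2 y j)) hn hq hqi hμ hϱ (hDD i j)
    rw [hA] at e1
    rw [hB] at e2
    have e4 := integral_sub (h1D i j) (h2D i j)
    simp only [← mul_sub, ← sub_mul] at e4
    simp only [t]
    rw [e3, e4, ← e1, ← e2]
    ring
  let r (x : X) : ℝ := μ x * ((∫ y, ϱ x y * ‖s2 y‖ ^ 2 ∂n) - ‖∫ y, ϱ x y • s2 y ∂n‖ ^ 2)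
  let G (A : Matrix (Fin d) (Fin d) ℝ) (x : X) : ℝ :=
    ∑ i, ∑ j, 2 * A i j * u i j x + ∑ i, ∑ j, ∑ k, A i j * A i k * t j k x
  have hcond {f : X → Y → ℝ}
      (hf : Integrable (fun z : X × Y => q z.1 z.2 * f z.1 z.2) (m.prod n)) :
      ∀ᵐ x ∂m, Integrable (fun y => ϱ x y * f x y) n :=
    integrable_conditional_ae hϱ hf
  have hGi (A : Matrix (Fin d) (Fin d) ℝ) : Integrable (G A) m :=
    integrable_sum_quadratic hui hti A
  have hFG (A : Matrix (Fin d) (Fin d) ℝ) :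
      ∫ x, μ x * ((∫ y, ϱ x y * ‖Matrix.toEuclideanLin A (s1 x y) +
          Matrix.toEuclideanLin (1 - A) (s2 y)‖ ^ 2 ∂n) -
        ‖∫ y, ϱ x y • (Matrix.toEuclideanLin A (s1 x y) +
          Matrix.toEuclideanLin (1 - A) (s2 y)) ∂n‖ ^ 2) ∂m = ∫ x, (r x + G A x) ∂m := by
    apply integral_congr_ae
    filter_upwards [ae_all_iff.2 fun i => hcond (f := fun x y => s1 x y i) (h1 i),
      ae_all_iff.2 fun i => hcond (f := fun _ y => s2 y i) (h2 i),
      ae_all_iff.2 fun i => hcond (f := fun _ y => s2 y i * s2 y i) (h22 i i),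
      ae_all_iff.2 fun i => ae_all_iff.2 fun j =>
        hcond (f := fun x y => s2 y i * (s1 x y j - s2 y j)) (h2D i j),
      ae_all_iff.2 fun i => ae_all_iff.2 fun j =>
        hcond (f := fun x y => (s1 x y i - s2 y i) * (s1 x y j - s2 y j)) (hDD i j)]
      with x k1 k2 k22 k2D kDD
    rw [integral_controlVariate A k1 k2 (hmean x), integral_norm_sq_controlVariate A k22 k2D kDD]
    simp only [r, G, u, t, mul_left_comm _ (μ x), ← Finset.mul_sum]
    ring
  by_cases hr : Integrable r m
  · refine ⟨∫ x, r x ∂m, 1, zero_le_one, fun A => ?_⟩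
    rw [hFG, integral_add hr (hGi A), integral_sum_quadratic hui hti hu ht, one_mul]
  · refine ⟨0, 0, le_rfl, fun A => ?_⟩
    rw [hFG, zero_mul, add_zero]
    refine integral_undef fun h => hr ?_
    exact (h.sub (hGi A)).congr (.of_forall fun x => add_sub_cancel_right _ _)

end Objective

theorem continuous_gradient_log {E : Type*} [NormedAddCommGroup E] [InnerProductSpace ℝ E]
    [CompleteSpace E] {f : E → ℝ} (hf : ContDiff ℝ (⊤ : ℕ∞) f) (hpos : ∀ z, 0 < f z) :
    Continuous (gradient fun z => Real.log (f z)) :=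
  (InnerProductSpace.toDual ℝ E).symm.continuous.comp
    ((hf.log fun z => (hpos z).ne').continuous_fderiv (by simp))

section Score

variable {d : ℕ} {f : EuclideanSpace ℝ (Fin d) → ℝ} {I : Matrix (Fin d) (Fin d) ℝ}

/-- A positive definite score covariance forces all second moments of the score to be finite. -/
theorem integrable_score_mul_score (hf : ContDiff ℝ (⊤ : ℕ∞) f) (hpos : ∀ z, 0 < f z)
    (hI : ∀ i j, I i j = ∫ z, f z * (gradient (fun w => Real.log (f w)) z i *
      gradient (fun w => Real.log (f w)) z j)) (hpd : I.PosDef) (i j : Fin d) :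
    Integrable fun z => f z * (gradient (fun w => Real.log (f w)) z i *
      gradient (fun w => Real.log (f w)) z j) := by
  have hc := continuous_gradient_log hf hpos
  have hfc := hf.continuous
  have hdiag (i : Fin d) : Integrable fun z => f z * (gradient (fun w => Real.log (f w)) z i *
      gradient (fun w => Real.log (f w)) z i) :=
    Integrable.of_integral_ne_zero (by rw [← hI]; exact hpd.diag_pos.ne')
  exact integrable_weight_mul_mul (fun z => (hpos z).le)
    (Continuous.aestronglyMeasurable (by fun_prop)) (hdiag i) (hdiag j)

theorem integrable_score (hf : ContDiff ℝ (⊤ : ℕ∞) f) (hpos : ∀ z, 0 < f z)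
    (hprob : ∫ z, f z = 1)
    (hI : ∀ i j, I i j = ∫ z, f z * (gradient (fun w => Real.log (f w)) z i *
      gradient (fun w => Real.log (f w)) z j)) (hpd : I.PosDef) (i : Fin d) :
    Integrable fun z => f z * gradient (fun w => Real.log (f w)) z i := by
  have hc := continuous_gradient_log hf hpos
  have hfc := hf.continuous
  have hfi : Integrable f := Integrable.of_integral_ne_zero (by rw [hprob]; exact one_ne_zero)
  simpa using integrable_weight_mul_mul (g := fun _ => 1) (fun z => (hpos z).le)
    (Continuous.aestronglyMeasurable (by fun_prop))
    (integrable_score_mul_score hf hpos hI hpd i i) (by simpa using hfi)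

end Score

/-- **Optimal matrix control-variate schedule and convexity of the objective.** -/
theorem optimal_matrix_cv_schedule
    (d : ℕ) (l : ℝ) (hl : l ∈ Set.Ioo (0 : ℝ) 1)
    (ν p : EuclideanSpace ℝ (Fin d) → ℝ)
    (hν : ContDiff ℝ (⊤ : ℕ∞) ν) (hp : ContDiff ℝ (⊤ : ℕ∞) p)
    (hνpos : ∀ z, 0 < ν z) (hppos : ∀ z, 0 < p z)
    (hνprob : ∫ z, ν z = 1) (hpprob : ∫ z, p z = 1)
    (μ : EuclideanSpace ℝ (Fin d) → ℝ)
    (hμ : ∀ x, μ x =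
      ∫ y, (1 - l) ^ (-(d : ℝ) / 2) *
        ν ((Real.sqrt (1 - l))⁻¹ • (x - Real.sqrt l • y)) * p y)
    (ϱ : EuclideanSpace ℝ (Fin d) → EuclideanSpace ℝ (Fin d) → ℝ)
    (hϱ : ∀ x y, ϱ x y =
      (1 - l) ^ (-(d : ℝ) / 2) *
        ν ((Real.sqrt (1 - l))⁻¹ • (x - Real.sqrt l • y)) * p y / μ x)
    (s1 : EuclideanSpace ℝ (Fin d) → EuclideanSpace ℝ (Fin d) → EuclideanSpace ℝ (Fin d))
    (s2 : EuclideanSpace ℝ (Fin d) → EuclideanSpace ℝ (Fin d))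
    (hs1 : ∀ x y, s1 x y = (Real.sqrt (1 - l))⁻¹ •
      gradient (fun z => Real.log (ν z))
        ((Real.sqrt (1 - l))⁻¹ • (x - Real.sqrt l • y)))
    (hs2 : ∀ y, s2 y = (Real.sqrt l)⁻¹ • gradient (fun z => Real.log (p z)) y)
    -- the score covariance matrices, assumed positive definite
    (Iν Ip : Matrix (Fin d) (Fin d) ℝ)
    (hIν : ∀ i j, Iν i j = ∫ z, ν z *
      (gradient (fun w => Real.log (ν w)) z i *
        gradient (fun w => Real.log (ν w)) z j))
    (hIp : ∀ i j, Ip i j = ∫ z, p z *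
      (gradient (fun w => Real.log (p w)) z i *
        gradient (fun w => Real.log (p w)) z j))
    (hIνpd : Iν.PosDef) (hIppd : Ip.PosDef)
    -- Stein double-expectation identities (may be assumed)
    (hA : ∀ i j, (∫ x, μ x * ∫ y, ϱ x y * (s1 x y i * (s1 x y j - s2 y j))) =
      (1 - l)⁻¹ * Iν i j)
    (hB : ∀ i j, (∫ x, μ x * ∫ y, ϱ x y * (s2 y i * (s1 x y j - s2 y j))) =
      -(l⁻¹ * Ip i j))
    -- both identities are unbiased for the score (equal conditional means)
    (hmean : ∀ x, (∫ y, ϱ x y • s1 x y) = ∫ y, ϱ x y • s2 y)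
    -- the expected-variance objective over matrices
    (F : Matrix (Fin d) (Fin d) ℝ → ℝ)
    (hF : ∀ A : Matrix (Fin d) (Fin d) ℝ, F A = ∫ x, μ x *
      ((∫ y, ϱ x y * ‖Matrix.toEuclideanLin A (s1 x y) +
          Matrix.toEuclideanLin ((1 : Matrix (Fin d) (Fin d) ℝ) - A) (s2 y)‖ ^ 2) -
        ‖∫ y, ϱ x y • (Matrix.toEuclideanLin A (s1 x y) +
          Matrix.toEuclideanLin ((1 : Matrix (Fin d) (Fin d) ℝ) - A) (s2 y))‖ ^ 2)) :
    (∀ A : Matrix (Fin d) (Fin d) ℝ,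
      F (l⁻¹ • (Ip * ((1 - l)⁻¹ • Iν + l⁻¹ • Ip)⁻¹)) ≤ F A) ∧
    ConvexOn ℝ Set.univ F := by
  obtain ⟨hl0, hl1⟩ := hl
  set a : ℝ := (Real.sqrt (1 - l))⁻¹
  set b : ℝ := Real.sqrt l
  set c : ℝ := (1 - l) ^ (-(d : ℝ) / 2)
  have ha0 : a ≠ 0 := inv_ne_zero (Real.sqrt_pos.2 (by linarith)).ne'
  have hc0 : 0 < c := Real.rpow_pos_of_pos (by linarith) _
  have hνi : Integrable ν := Integrable.of_integral_ne_zero (by rw [hνprob]; exact one_ne_zero)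
  have hpi : Integrable p := Integrable.of_integral_ne_zero (by rw [hpprob]; exact one_ne_zero)
  have hν1 := integrable_score hν hνpos hνprob hIν hIνpd
  have hp1 := integrable_score hp hppos hpprob hIp hIppd
  have hν2 := integrable_score_mul_score hν hνpos hIν hIνpd
  have hp2 := integrable_score_mul_score hp hppos hIp hIppd
  let q : EuclideanSpace ℝ (Fin d) → EuclideanSpace ℝ (Fin d) → ℝ :=
    fun x y => c * ν (a • (x - b • y)) * p y
  have hq (x y) : 0 < q x y := mul_pos (mul_pos hc0 (hνpos _)) (hppos _)
  let P : Measure (EuclideanSpace ℝ (Fin d) × EuclideanSpace ℝ (Fin d)) := volume.prod volume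
  have hqi : Integrable (fun z => q z.1 z.2) P := by
    refine ((integrable_shear_mul b ha0 hνi hpi).const_mul c).congr (.of_forall fun z => ?_)
    simp only [q]
    ring
  have h11 (i j : Fin d) : Integrable (fun z => q z.1 z.2 * (s1 z.1 z.2 i * s1 z.1 z.2 j)) P := by
    refine ((integrable_shear_mul b ha0 (hν2 i j) hpi).const_mul (c * a * a)).congr
      (.of_forall fun z => ?_)
    simp only [q, hs1, PiLp.smul_apply, smul_eq_mul]
    ring
  have h12 (i j : Fin d) : Integrable (fun z => q z.1 z.2 * (s1 z.1 z.2 i * s2 z.2 j)) P := by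
    refine ((integrable_shear_mul b ha0 (hν1 i) (hp1 j)).const_mul (c * a * b⁻¹)).congr
      (.of_forall fun z => ?_)
    simp only [q, hs1, hs2, PiLp.smul_apply, smul_eq_mul]
    ring
  have h22 (i j : Fin d) : Integrable (fun z => q z.1 z.2 * (s2 z.2 i * s2 z.2 j)) P := by
    refine ((integrable_shear_mul b ha0 hνi (hp2 i j)).const_mul (c * b⁻¹ * b⁻¹)).congr
      (.of_forall fun z => ?_)
    simp only [q, hs2, PiLp.smul_apply, smul_eq_mul]
    ring
  have h1 (i : Fin d) : Integrable (fun z => q z.1 z.2 * s1 z.1 z.2 i) P := by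
    refine ((integrable_shear_mul b ha0 (hν1 i) hpi).const_mul (c * a)).congr
      (.of_forall fun z => ?_)
    simp only [q, hs1, PiLp.smul_apply, smul_eq_mul]
    ring
  have h2 (i : Fin d) : Integrable (fun z => q z.1 z.2 * s2 z.2 i) P := by
    refine ((integrable_shear_mul b ha0 hνi (hp1 i)).const_mul (c * b⁻¹)).congr
      (.of_forall fun z => ?_)
    simp only [q, hs2, PiLp.smul_apply, smul_eq_mul]
    ring
  have h1D (i j : Fin d) : Integrable
      (fun z => q z.1 z.2 * (s1 z.1 z.2 i * (s1 z.1 z.2 j - s2 z.2 j))) P := by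
    refine ((h11 i j).sub (h12 i j)).congr (.of_forall fun z => ?_)
    simp only [Pi.sub_apply]
    ring
  have h2D (i j : Fin d) : Integrable
      (fun z => q z.1 z.2 * (s2 z.2 i * (s1 z.1 z.2 j - s2 z.2 j))) P := by
    refine ((h12 j i).sub (h22 i j)).congr (.of_forall fun z => ?_)
    simp only [Pi.sub_apply]
    ring
  have hvol : (volume : Measure (EuclideanSpace ℝ (Fin d))) ≠ 0 := NeZero.ne _
  set M : Matrix (Fin d) (Fin d) ℝ := (1 - l)⁻¹ • Iν + l⁻¹ • Ip with hM
  have hMpd : M.PosDef :=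
    (hIνpd.smul (inv_pos.2 (by linarith))).add (hIppd.smul (inv_pos.2 hl0))
  obtain ⟨c', e, he, hFe⟩ := exists_expectedVariance_eq (M := M) (B := l⁻¹ • Ip) hvol hq hqi hμ hϱ
    h1 h2 h22 h1D h2D (fun i j => by rw [hA]; simp [hM]) (fun i j => by rw [hB]; simp) hmean
  have hopt : (l⁻¹ • (Ip * M⁻¹)) * M = l⁻¹ • Ip := by
    rw [Matrix.smul_mul, Matrix.mul_assoc,
      Matrix.nonsing_inv_mul _ ((Matrix.isUnit_iff_isUnit_det _).1 hMpd.isUnit), Matrix.mul_one]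
  have hF' : F = fun A => c' +
      e • ((A * M * A.transpose).trace - 2 * (A * (l⁻¹ • Ip).transpose).trace) := by
    funext A
    rw [hF, hFe, smul_eq_mul]
  rw [hF']
  refine ⟨fun A => ?_, ?_⟩
  · have h := mul_le_mul_of_nonneg_left (trace_quadratic_min hMpd.posSemidef hopt A) he
    simpa using h
  · exact (convexOn_const _ convex_univ).add
      ((convexOn_trace_quadratic hMpd.posSemidef _).smul he)
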